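/- arXiv:2106.01070 — 2 statements merged into one kernel-verified Lean document; each statement's English description precedes it below -/
import Mathlib

section
/- The Wasserstein projection of the empirical measure onto the fair set equals the value of a finite linear program: 𝒫(P̂_N) := inf_{Q ∈ ℱ} W_c(Q, P̂_N) equals the optimal value of min_p (1/N) Σ_{i=1}^N p_i d(x_i) subject to p ∈ [0,1]^N and Σ_{i=1}^N (1 − 2𝒞(x_i)) φ(u_i, E_{P̂_N}[U]) p_i = − Σ_{i=1}^N 𝒞(x_i) φ(u_i, E_{P̂_N}[U]), with the convention that both sides equal +∞ when the constraint set is empty. -/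
open BigOperators ENNReal MeasureTheory
open scoped Classical

noncomputable section

/-- Optimal transport cost between two measures, for a cost `c`:
`W_c(Q₁,Q₂) = inf { E_π[c(Z,Z')] : π a coupling of (Q₁,Q₂) }`. -/
def Wcost {Z : Type*} [MeasurableSpace Z] (c : Z → Z → ℝ≥0∞) (μ ν : Measure Z) : ℝ≥0∞ :=
  ⨅ π ∈ {π : Measure (Z × Z) |
      π.map Prod.fst = μ ∧ π.map Prod.snd = ν}, ∫⁻ p, c p.1 p.2 ∂π

/-- The transport cost on `𝒵 = 𝒳 × 𝒜 × 𝒴` built from a ground cost `c̄` on features: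
`c((x,a,y),(x',a',y')) = c̄(x,x') + ∞·|a−a'| + ∞·|y−y'|` (with `∞·0 = 0`). -/
def prodCost {X A : Type*} (cbar : X → X → ℝ≥0∞) :
    (X × A × Bool) → (X × A × Bool) → ℝ≥0∞ :=
  fun z z' => cbar z.1 z'.1 + (if z.2.1 = z'.2.1 then (0 : ℝ≥0∞) else ⊤) +
    (if z.2.2 = z'.2.2 then (0 : ℝ≥0∞) else ⊤)

/-- Distance to the set of features with the opposite classifier label:
`d(x) = inf { c̄(x,x') : 𝒞(x') = 1 − 𝒞(x) }`. -/
def dBoundary {X : Type*} (cbar : X → X → ℝ≥0∞) (C : X → ℝ) (x : X) : ℝ≥0∞ :=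
  ⨅ x' ∈ {x' | C x' = 1 - C x}, cbar x x'

/-- The set of distributions on `𝒵` under which the classifier `𝒞` is fair with
respect to the discerning tuple `(U, φ)`: `ℱ = { Q : E_Q[𝒞(X) φ(U, E_Q[U])] = 0 }`. -/
def fairSet {d s m : ℕ} (𝒳 : Set (Fin d → ℝ)) (𝒜 : Type*) [MeasurableSpace 𝒜]
    (C : ↥𝒳 → ℝ) (ψ : 𝒜 × Bool → Fin s → ℝ)
    (φ : (Fin s → ℝ) → (Fin s → ℝ) → Fin m → ℝ) :
    Set (Measure (↥𝒳 × 𝒜 × Bool)) :=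
  {Q | IsProbabilityMeasure Q ∧
    (∫ z, C z.1 • φ (ψ z.2) (∫ z', ψ z'.2 ∂Q) ∂Q) = 0}

/-- The empirical measure `P̂_N = N⁻¹ Σᵢ δ_{(xᵢ,aᵢ,yᵢ)}`. -/
def empMeasure {d : ℕ} {𝒳 : Set (Fin d → ℝ)} {𝒜 : Type*} [MeasurableSpace 𝒜]
    {N : ℕ} (x : Fin N → ↥𝒳) (a : Fin N → 𝒜) (y : Fin N → Bool) :
    Measure (↥𝒳 × 𝒜 × Bool) :=
  (N : ℝ≥0∞)⁻¹ • ∑ i, Measure.dirac (x i, a i, y i)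

/-! A coupling of finite cost with the empirical measure leaves every label `(aᵢ, yᵢ)` fixed, so it
amounts to a law `κᵢ` for the moved features of each sample point. The mean of `U` is then that of
the empirical measure, and fairness becomes a linear condition on the masses `pᵢ` which the `κᵢ`
carry into the opposite class. Moving the mass `pᵢ` across the boundary costs at least `pᵢ d(xᵢ)`,
and laws supported on `xᵢ` and one nearly closest point of the opposite class come arbitrarily
close to this bound. -/

section Disintegration

open scoped ProbabilityTheory

variable {Ω Z : Type*} [MeasurableSpace Ω] [MeasurableSpace Z] [MeasurableSingletonClass Z]
  {f : Ω → Z} {μ : Measure Ω}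

theorem sum_measure_smul_cond_fiber_of_ae_mem [IsFiniteMeasure μ] (hf : Measurable f) {S : Finset Z}
    (hS : ∀ᵐ ω ∂μ, f ω ∈ S) : ∑ z ∈ S, μ (f ⁻¹' {z}) • μ[|f ⁻¹' {z}] = μ := by
  ext B -
  have hfiber (z : Z) : MeasurableSet (f ⁻¹' {z}) := hf (measurableSet_singleton z)
  calc (∑ z ∈ S, μ (f ⁻¹' {z}) • μ[|f ⁻¹' {z}]) B
      = ∑ z ∈ S, μ.restrict B (f ⁻¹' {z}) := by
        simp only [Measure.coe_finsetSum, Finset.sum_apply, Measure.smul_apply, smul_eq_mul]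
        refine Finset.sum_congr rfl fun z _ => ?_
        rw [mul_comm, ProbabilityTheory.cond_mul_eq_inter (hfiber z),
          Measure.restrict_apply (hfiber z)]
    _ = μ.restrict B (f ⁻¹' S) := sum_measure_preimage_singleton S fun z _ => hfiber z
    _ = μ.restrict B Set.univ :=
        measure_congr (Filter.eventuallyEq_univ.2 (ae_restrict_of_ae hS))
    _ = μ B := by simp

variable {ι : Type*} [Fintype ι] {w : ι → ℝ≥0∞} {z : ι → Z}

theorem measure_fiber_of_map_eq_sum_dirac (hf : Measurable f)
    (hμ : μ.map f = ∑ i, w i • Measure.dirac (z i)) (v : Z) :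
    μ (f ⁻¹' {v}) = ∑ i with z i = v, w i := by
  rw [← Measure.map_apply hf (measurableSet_singleton v), hμ, Finset.sum_filter]
  simp [Set.indicator_apply]

theorem sum_smul_cond_fiber_of_map_eq_sum_dirac [IsFiniteMeasure μ] (hf : Measurable f)
    (hμ : μ.map f = ∑ i, w i • Measure.dirac (z i)) : ∑ i, w i • μ[|f ⁻¹' {z i}] = μ := by
  have hmem : ∀ᵐ ω ∂μ, f ω ∈ Finset.univ.image z := by
    refine ae_of_ae_map (p := (· ∈ Finset.univ.image z)) hf.aemeasurable ?_
    rw [hμ, ae_iff]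
    simp
  calc ∑ i, w i • μ[|f ⁻¹' {z i}]
      = ∑ v ∈ Finset.univ.image z, ∑ i with z i = v, w i • μ[|f ⁻¹' {z i}] :=
        (Finset.sum_fiberwise_of_maps_to (fun i hi => Finset.mem_image_of_mem z hi) _).symm
    _ = ∑ v ∈ Finset.univ.image z, μ (f ⁻¹' {v}) • μ[|f ⁻¹' {v}] := by
        refine Finset.sum_congr rfl fun v _ => ?_
        rw [measure_fiber_of_map_eq_sum_dirac hf hμ, Finset.sum_smul]
        exact Finset.sum_congr rfl fun i hi => by rw [(Finset.mem_filter.1 hi).2]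
    _ = μ := sum_measure_smul_cond_fiber_of_ae_mem hf hmem

theorem exists_sum_smul_eq_of_map_eq_sum_dirac [IsFiniteMeasure μ] (hf : Measurable f)
    (hw : ∀ i, w i ≠ 0) (hμ : μ.map f = ∑ i, w i • Measure.dirac (z i)) :
    ∃ ρ : ι → Measure Ω, (∀ i, IsProbabilityMeasure (ρ i)) ∧
      (∀ i, ∀ᵐ ω ∂ρ i, f ω = z i) ∧ ∑ i, w i • ρ i = μ := by
  refine ⟨fun i => μ[|f ⁻¹' {z i}], fun i => ?_,
    fun i => ProbabilityTheory.ae_cond_mem (hf (measurableSet_singleton _)),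
    sum_smul_cond_fiber_of_map_eq_sum_dirac hf hμ⟩
  refine ProbabilityTheory.cond_isProbabilityMeasure fun h => hw i ?_
  rw [measure_fiber_of_map_eq_sum_dirac hf hμ] at h
  exact Finset.sum_eq_zero_iff.1 h i (by simp)

end Disintegration

theorem ne_top_of_inv_natCast_mul_sum_ne_top {n : ℕ} {ι : Type*} [Fintype ι] {f : ι → ℝ≥0∞}
    (h : (n : ℝ≥0∞)⁻¹ * ∑ i, f i ≠ ⊤) (i : ι) : f i ≠ ⊤ := by
  have hsum : ∑ i, f i < ⊤ := ENNReal.lt_top_of_mul_ne_top_right h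
    (ENNReal.inv_ne_zero.2 (ENNReal.natCast_ne_top n))
  exact (ENNReal.lt_top_of_sum_ne_top hsum.ne (Finset.mem_univ i)).ne

section LabelledMixture

variable {X T : Type*} [MeasurableSpace X] [MeasurableSpace T] {N : ℕ}

/-- The uniform mixture on `X × T` of `N` feature laws `κ i`, the `i`-th carrying the label `t i`.
Measures at finite transport distance from an empirical measure are of this form, with `κ i` the
law of the features to which the `i`-th sample point is moved. -/
def labelledMixture (t : Fin N → T) (κ : Fin N → Measure X) : Measure (X × T) :=
  (N : ℝ≥0∞)⁻¹ • ∑ i, (κ i).map (·, t i)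

variable (t : Fin N → T) (κ : Fin N → Measure X)

theorem isProbabilityMeasure_inv_smul_sum {Ω : Type*} [MeasurableSpace Ω] (hN : 0 < N)
    (ρ : Fin N → Measure Ω) [∀ i, IsProbabilityMeasure (ρ i)] :
    IsProbabilityMeasure ((N : ℝ≥0∞)⁻¹ • ∑ i, ρ i) :=
  ⟨by simp [ENNReal.inv_mul_cancel (Nat.cast_ne_zero.2 hN.ne') (ENNReal.natCast_ne_top N)]⟩

theorem isProbabilityMeasure_labelledMixture (hN : 0 < N) [∀ i, IsProbabilityMeasure (κ i)] :
    IsProbabilityMeasure (labelledMixture t κ) :=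
  have (i : Fin N) : IsProbabilityMeasure ((κ i).map (·, t i)) :=
    Measure.isProbabilityMeasure_map (by fun_prop)
  isProbabilityMeasure_inv_smul_sum hN _

variable [MeasurableSingletonClass T] {E : Type*} [NormedAddCommGroup E] [NormedSpace ℝ E]
  {t κ}

theorem integral_labelledMixture {f : X × T → E}
    (hf : ∀ i, Integrable (fun x => f (x, t i)) (κ i)) :
    ∫ z, f z ∂labelledMixture t κ = (N : ℝ)⁻¹ • ∑ i, ∫ x, f (x, t i) ∂κ i := by
  have hemb (i : Fin N) : MeasurableEmbedding ((·, t i) : X → X × T) :=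
    MeasurableEmbedding.id.prodMk_right (t i)
  rw [labelledMixture, integral_smul_measure,
    integral_finsetSum_measure fun i _ => (hemb i).integrable_map_iff.2 (hf i)]
  simp [(hemb _).integral_map]

theorem integral_label_labelledMixture [CompleteSpace E] [∀ i, IsProbabilityMeasure (κ i)]
    (ψ : T → E) : ∫ z, ψ z.2 ∂labelledMixture t κ = (N : ℝ)⁻¹ • ∑ i, ψ (t i) := by
  rw [integral_labelledMixture fun i => integrable_const (ψ (t i))]
  simp

end LabelledMixture

section Transport

variable {X A : Type*} {cbar : X → X → ℝ≥0∞}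

theorem prodCost_same_label (x' x : X) (t : A × Bool) :
    prodCost cbar (x', t) (x, t) = cbar x' x := by
  simp [prodCost]

theorem prodCost_eq_top_of_label_ne {z z' : X × A × Bool} (h : z.2 ≠ z'.2) :
    prodCost cbar z z' = ⊤ := by
  rcases not_and_or.1 (mt Prod.ext_iff.2 h) with h | h <;> simp [prodCost, h]

theorem cost_le_prodCost (z z' : X × A × Bool) : cbar z.1 z'.1 ≤ prodCost cbar z z' := by
  rw [prodCost, add_assoc]
  exact le_self_add

variable [MeasurableSpace X] [MeasurableSpace A]

theorem Wcost_labelledMixture_le {N : ℕ} (t : Fin N → A × Bool) (x : Fin N → X)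
    (κ : Fin N → Measure X) [∀ i, IsProbabilityMeasure (κ i)] :
    Wcost (prodCost cbar) (labelledMixture t κ)
        ((N : ℝ≥0∞)⁻¹ • ∑ i, Measure.dirac (x i, t i)) ≤
      (N : ℝ≥0∞)⁻¹ * ∑ i, ∫⁻ x', cbar x' (x i) ∂κ i := by
  let g (i : Fin N) (x' : X) : (X × A × Bool) × (X × A × Bool) := ((x', t i), (x i, t i))
  have hg (i : Fin N) : Measurable (g i) := by fun_prop
  refine (iInf₂_le ((N : ℝ≥0∞)⁻¹ • ∑ i, (κ i).map (g i)) ⟨?fst, ?snd⟩).trans ?cost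
  case fst =>
    rw [Measure.map_smul, Measure.map_finset_sum measurable_fst.aemeasurable, labelledMixture]
    simp only [Measure.map_map measurable_fst (hg _), Function.comp_def, g]
  case snd =>
    rw [Measure.map_smul, Measure.map_finset_sum measurable_snd.aemeasurable]
    simp only [Measure.map_map measurable_snd (hg _), Function.comp_def, g, Measure.map_const,
      measure_univ, one_smul]
  case cost =>
    rw [lintegral_smul_measure, lintegral_finsetSum_measure, smul_eq_mul]
    gcongr with i
    calc ∫⁻ w, prodCost cbar w.1 w.2 ∂(κ i).map (g i)
        ≤ ∫⁻ x', prodCost cbar (g i x').1 (g i x').2 ∂κ i := lintegral_map_le _ _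
      _ = ∫⁻ x', cbar x' (x i) ∂κ i := by simp only [g, prodCost_same_label]

variable {ρ : Measure ((X × A × Bool) × (X × A × Bool))} {x : X} {t : A × Bool}

theorem ae_label_eq_of_lintegral_prodCost_ne_top [MeasurableSingletonClass A]
    (hρ : ∀ᵐ w ∂ρ, w.2 = (x, t)) (hfin : ∫⁻ w, prodCost cbar w.1 w.2 ∂ρ ≠ ⊤) :
    ∀ᵐ w ∂ρ, w.1.2 = t := by
  let S : Set ((X × A × Bool) × (X × A × Bool)) := {w | w.1.2 ≠ t}
  have hS : MeasurableSet S :=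
    (measurable_snd.comp measurable_fst (measurableSet_singleton t)).compl
  have hle : ⊤ * ρ S ≤ ∫⁻ w, prodCost cbar w.1 w.2 ∂ρ := by
    rw [← lintegral_indicator_const hS]
    refine lintegral_mono_ae (hρ.mono fun w hw => ?_)
    by_cases hwS : w ∈ S
    · rw [prodCost_eq_top_of_label_ne (by rw [hw]; exact hwS)]
      exact le_top
    · simp [hwS]
  by_contra hne
  exact hfin (top_unique (ENNReal.top_mul hne ▸ hle))

theorem map_fst_eq_map_label (hρ : ∀ᵐ w ∂ρ, w.1.2 = t) :
    ρ.map Prod.fst = (ρ.map fun w => w.1.1).map (·, t) := by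
  rw [Measure.map_map (by fun_prop) (by fun_prop)]
  exact Measure.map_congr (hρ.mono fun w hw => Prod.ext rfl hw)

theorem lintegral_cost_map_le_lintegral_prodCost (hρ : ∀ᵐ w ∂ρ, w.2 = (x, t)) :
    ∫⁻ x', cbar x' x ∂ρ.map (fun w => w.1.1) ≤ ∫⁻ w, prodCost cbar w.1 w.2 ∂ρ :=
  (lintegral_map_le _ _).trans <| lintegral_mono_ae <| hρ.mono fun w hw => by
    simpa only [hw] using cost_le_prodCost (cbar := cbar) w.1 w.2

variable [MeasurableSingletonClass X] [MeasurableSingletonClass A] {N : ℕ} {x : Fin N → X}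
  {t : Fin N → A × Bool}

theorem exists_labelledMixture_eq_map_fst (hN : 0 < N)
    {π : Measure ((X × A × Bool) × (X × A × Bool))}
    (hπ : π.map Prod.snd = (N : ℝ≥0∞)⁻¹ • ∑ i, Measure.dirac (x i, t i))
    (hfin : ∫⁻ w, prodCost cbar w.1 w.2 ∂π ≠ ⊤) :
    ∃ κ : Fin N → Measure X, (∀ i, IsProbabilityMeasure (κ i)) ∧
      labelledMixture t κ = π.map Prod.fst ∧
      (N : ℝ≥0∞)⁻¹ * ∑ i, ∫⁻ x', cbar x' (x i) ∂κ i ≤ ∫⁻ w, prodCost cbar w.1 w.2 ∂π := by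
  have : IsProbabilityMeasure π :=
    have : IsProbabilityMeasure (π.map Prod.snd) := hπ ▸ isProbabilityMeasure_inv_smul_sum hN _
    Measure.isProbabilityMeasure_of_map Prod.snd
  obtain ⟨ρ, hρ_prob, hρ_snd, hπ_eq⟩ := exists_sum_smul_eq_of_map_eq_sum_dirac measurable_snd
    (fun _ => ENNReal.inv_ne_zero.2 (ENNReal.natCast_ne_top N)) (hπ.trans Finset.smul_sum)
  rw [← Finset.smul_sum] at hπ_eq
  have hcost : ∫⁻ w, prodCost cbar w.1 w.2 ∂π =
      (N : ℝ≥0∞)⁻¹ * ∑ i, ∫⁻ w, prodCost cbar w.1 w.2 ∂ρ i := by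
    rw [← hπ_eq, lintegral_smul_measure, lintegral_finsetSum_measure, smul_eq_mul]
  have hρ_fin (i : Fin N) : ∫⁻ w, prodCost cbar w.1 w.2 ∂ρ i ≠ ⊤ :=
    ne_top_of_inv_natCast_mul_sum_ne_top (hcost ▸ hfin) i
  refine ⟨fun i => (ρ i).map fun w => w.1.1,
    fun i => Measure.isProbabilityMeasure_map (by fun_prop), ?_, ?_⟩
  · rw [← hπ_eq, Measure.map_smul, Measure.map_finset_sum measurable_fst.aemeasurable,
      labelledMixture]
    simp only [map_fst_eq_map_label
      (ae_label_eq_of_lintegral_prodCost_ne_top (hρ_snd _) (hρ_fin _))]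
  · rw [hcost]
    gcongr with i
    exact lintegral_cost_map_le_lintegral_prodCost (hρ_snd i)

theorem iInf_Wcost_empirical_eq_iInf_labelledMixture (hN : 0 < N)
    (F : Set (Measure (X × A × Bool))) :
    ⨅ Q ∈ F, Wcost (prodCost cbar) Q ((N : ℝ≥0∞)⁻¹ • ∑ i, Measure.dirac (x i, t i)) =
      ⨅ κ ∈ {κ : Fin N → Measure X |
        (∀ i, IsProbabilityMeasure (κ i)) ∧ labelledMixture t κ ∈ F},
        (N : ℝ≥0∞)⁻¹ * ∑ i, ∫⁻ x', cbar x' (x i) ∂κ i := by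
  refine le_antisymm (le_iInf₂ fun κ ⟨_, hκF⟩ => ?_) (le_iInf₂ fun Q hQ => ?_)
  · exact (iInf₂_le _ hκF).trans (Wcost_labelledMixture_le t x κ)
  · refine le_iInf₂ fun π ⟨hfst, hsnd⟩ => ?_
    by_cases hfin : ∫⁻ w, prodCost cbar w.1 w.2 ∂π = ⊤
    · exact hfin ▸ le_top
    · obtain ⟨κ, hκ, hκQ, hle⟩ := exists_labelledMixture_eq_map_fst hN hsnd hfin
      exact (iInf₂_le κ ⟨hκ, (hκQ.trans hfst) ▸ hQ⟩).trans hle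

end Transport

section BinaryClassifier

variable {X : Type*}

/-- The points which the `0`-`1` classifier `C` puts into the class other than that of `x`. -/
def oppositeClass (C : X → ℝ) (x : X) : Set X := {x' | C x' = 1 - C x}

variable {C : X → ℝ}

theorem notMem_oppositeClass_self (hC_bin : ∀ x, C x = 0 ∨ C x = 1) (x : X) :
    x ∉ oppositeClass C x := by
  rcases hC_bin x with h | h <;> simp [oppositeClass, h]

theorem eq_indicator_oppositeClass_add (hC_bin : ∀ x, C x = 0 ∨ C x = 1) (x x' : X) :
    C x' = (oppositeClass C x).indicator (fun _ => 1 - 2 * C x) x' + C x := by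
  rcases hC_bin x with h | h <;> rcases hC_bin x' with h' | h' <;>
    norm_num [oppositeClass, h, h']

variable [MeasurableSpace X]

theorem measurableSet_oppositeClass (hC_meas : Measurable C) (x : X) :
    MeasurableSet (oppositeClass C x) :=
  hC_meas (measurableSet_singleton (1 - C x))

theorem integrable_of_binary (hC_bin : ∀ x, C x = 0 ∨ C x = 1) (hC_meas : Measurable C)
    (κ : Measure X) [IsFiniteMeasure κ] : Integrable C κ :=
  .of_bound hC_meas.aestronglyMeasurable 1 <| ae_of_all _ fun x => by
    rcases hC_bin x with h | h <;> simp [h]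

theorem integral_eq_measureReal_oppositeClass (hC_bin : ∀ x, C x = 0 ∨ C x = 1)
    (hC_meas : Measurable C) (x : X) (κ : Measure X) [IsProbabilityMeasure κ] :
    ∫ x', C x' ∂κ = (1 - 2 * C x) * κ.real (oppositeClass C x) + C x := by
  have hmeas := measurableSet_oppositeClass hC_meas x
  calc ∫ x', C x' ∂κ
      = ∫ x', ((oppositeClass C x).indicator (fun _ => 1 - 2 * C x) x' + C x) ∂κ :=
        integral_congr_ae (ae_of_all _ (eq_indicator_oppositeClass_add hC_bin x))
    _ = (1 - 2 * C x) * κ.real (oppositeClass C x) + C x := by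
        rw [integral_add ((integrable_const _).indicator hmeas) (integrable_const _),
          integral_indicator_const _ hmeas, integral_const, probReal_univ, one_smul,
          smul_eq_mul, mul_comm]

end BinaryClassifier

section Fairness

variable {X T E F : Type*} [MeasurableSpace X] [MeasurableSpace T]
  [NormedAddCommGroup E] [NormedSpace ℝ E] [NormedAddCommGroup F] [NormedSpace ℝ F]

/-- `fairSet` with features in `X`, labels in `T` and the statistics `ψ`, `φ` valued in arbitrary
normed spaces. -/
def fairMeasures (C : X → ℝ) (ψ : T → E) (φ : E → E → F) : Set (Measure (X × T)) :=
  {Q | IsProbabilityMeasure Q ∧ ∫ z, C z.1 • φ (ψ z.2) (∫ z', ψ z'.2 ∂Q) ∂Q = 0}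

/-- The feasible region of the linear program of a sample with features `x i` and labels `t i`;
`p i` is the share of the mass of the `i`-th sample point whose predicted class is flipped. -/
def lpFeasible {N : ℕ} (C : X → ℝ) (ψ : T → E) (φ : E → E → F) (x : Fin N → X) (t : Fin N → T) :
    Set (Fin N → ℝ) :=
  {p | (∀ i, p i ∈ Set.Icc (0 : ℝ) 1) ∧
    ∑ i, ((1 - 2 * C (x i)) * p i) • φ (ψ (t i)) ((N : ℝ)⁻¹ • ∑ j, ψ (t j)) =
      -∑ i, C (x i) • φ (ψ (t i)) ((N : ℝ)⁻¹ • ∑ j, ψ (t j))}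

theorem labelledMixture_mem_fairMeasures_iff [MeasurableSingletonClass T] [CompleteSpace E]
    [CompleteSpace F] {C : X → ℝ} (hC_bin : ∀ x, C x = 0 ∨ C x = 1) (hC_meas : Measurable C)
    {ψ : T → E} {φ : E → E → F} {N : ℕ} (hN : 0 < N) (x : Fin N → X) (t : Fin N → T)
    (κ : Fin N → Measure X) [∀ i, IsProbabilityMeasure (κ i)] :
    labelledMixture t κ ∈ fairMeasures C ψ φ ↔
      (fun i => (κ i).real (oppositeClass C (x i))) ∈ lpFeasible C ψ φ x t := by
  set u := (N : ℝ)⁻¹ • ∑ j, ψ (t j) with hu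
  have hmean : ∫ z, ψ z.2 ∂labelledMixture t κ = u := integral_label_labelledMixture ψ
  have hexp : ∫ z, C z.1 • φ (ψ z.2) u ∂labelledMixture t κ = (N : ℝ)⁻¹ •
      (∑ i, ((1 - 2 * C (x i)) * (κ i).real (oppositeClass C (x i))) • φ (ψ (t i)) u +
        ∑ i, C (x i) • φ (ψ (t i)) u) := by
    rw [integral_labelledMixture fun i =>
      (integrable_of_binary hC_bin hC_meas (κ i)).smul_const (φ (ψ (t i)) u)]
    simp only [integral_smul_const,
      fun i => integral_eq_measureReal_oppositeClass hC_bin hC_meas (x i) (κ i),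
      add_smul, Finset.sum_add_distrib]
  simp only [fairMeasures, lpFeasible, Set.mem_ofPred_eq, hmean, hexp, ← hu,
    isProbabilityMeasure_labelledMixture t κ hN, true_and, Set.mem_Icc, measureReal_nonneg,
    measureReal_le_one, and_self, implies_true]
  rw [smul_eq_zero_iff_right (by positivity), add_eq_zero_iff_eq_neg]

end Fairness

section FlipCost

variable {X : Type*} {cbar : X → X → ℝ≥0∞} {C : X → ℝ}

theorem exists_mem_oppositeClass_cost_le {x : X} (hd : dBoundary cbar C x ≠ ⊤) {ε : ℝ≥0∞}
    (hε : ε ≠ 0) : ∃ x' ∈ oppositeClass C x, cbar x x' ≤ dBoundary cbar C x + ε := by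
  have hlt : ⨅ x' ∈ oppositeClass C x, cbar x x' < dBoundary cbar C x + ε :=
    ENNReal.lt_add_right hd hε
  obtain ⟨x', hx', hlt⟩ := by simpa only [iInf_lt_iff] using hlt
  exact ⟨x', hx', hlt.le⟩

variable [MeasurableSpace X]

theorem measure_oppositeClass_mul_dBoundary_le_lintegral (hC_meas : Measurable C) (x : X)
    (κ : Measure X) : κ (oppositeClass C x) * dBoundary cbar C x ≤ ∫⁻ x', cbar x x' ∂κ := by
  rw [mul_comm]
  exact (iInf_mul_le_setLIntegral (cbar x) (measurableSet_oppositeClass hC_meas x)).trans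
    (setLIntegral_le_lintegral _ _)

theorem exists_measure_oppositeClass_eq [MeasurableSingletonClass X]
    (hC_bin : ∀ x, C x = 0 ∨ C x = 1) {x : X} (hrefl : cbar x x = 0) {p : ℝ}
    (hp : p ∈ Set.Icc (0 : ℝ) 1)
    (hfin : ENNReal.ofReal p * dBoundary cbar C x ≠ ⊤) {ε : ℝ≥0∞} (hε : ε ≠ 0) :
    ∃ κ : Measure X, IsProbabilityMeasure κ ∧ κ.real (oppositeClass C x) = p ∧
      ∫⁻ x', cbar x x' ∂κ ≤ ENNReal.ofReal p * dBoundary cbar C x + ε := by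
  have hself : x ∉ oppositeClass C x := notMem_oppositeClass_self hC_bin x
  rcases hp.1.eq_or_lt with rfl | hp_pos
  · exact ⟨Measure.dirac x, inferInstance, by simp [measureReal_def, hself], by simp [hrefl]⟩
  have hd : dBoundary cbar C x ≠ ⊤ := fun h =>
    hfin (by rw [h, ENNReal.mul_top (ENNReal.ofReal_pos.2 hp_pos).ne'])
  obtain ⟨x', hx', hcost⟩ := exists_mem_oppositeClass_cost_le hd hε
  refine ⟨ENNReal.ofReal (1 - p) • Measure.dirac x + ENNReal.ofReal p • Measure.dirac x',
    ⟨?_⟩, ?_, ?_⟩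
  · simp [← ENNReal.ofReal_add (sub_nonneg.2 hp.2) hp.1]
  · simp [measureReal_def, hself, hx', hp.1]
  · calc ∫⁻ y, cbar x y ∂(ENNReal.ofReal (1 - p) • Measure.dirac x +
          ENNReal.ofReal p • Measure.dirac x')
        = ENNReal.ofReal p * cbar x x' := by simp [hrefl]
      _ ≤ ENNReal.ofReal p * (dBoundary cbar C x + ε) := by gcongr
      _ ≤ ENNReal.ofReal p * dBoundary cbar C x + ε := by
        rw [mul_add]
        gcongr
        exact mul_le_of_le_one_left zero_le (ENNReal.ofReal_le_one.2 hp.2)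

theorem exists_measure_oppositeClass_eq_of_sum_ne_top [MeasurableSingletonClass X]
    (hC_bin : ∀ x, C x = 0 ∨ C x = 1) (hrefl : ∀ x, cbar x x = 0) {N : ℕ}
    (hN : 0 < N) {p : Fin N → ℝ} (hp : ∀ i, p i ∈ Set.Icc (0 : ℝ) 1) (x : Fin N → X)
    (hfin : (N : ℝ≥0∞)⁻¹ * ∑ i, ENNReal.ofReal (p i) * dBoundary cbar C (x i) ≠ ⊤) {ε : ℝ≥0∞}
    (hε : ε ≠ 0) :
    ∃ κ : Fin N → Measure X, (∀ i, IsProbabilityMeasure (κ i)) ∧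
      (fun i => (κ i).real (oppositeClass C (x i))) = p ∧
      (N : ℝ≥0∞)⁻¹ * ∑ i, ∫⁻ x', cbar (x i) x' ∂κ i ≤
        (N : ℝ≥0∞)⁻¹ * ∑ i, ENNReal.ofReal (p i) * dBoundary cbar C (x i) + ε := by
  choose κ hκ_prob hκ_flip hκ_cost using fun i =>
    exists_measure_oppositeClass_eq hC_bin (hrefl (x i)) (hp i)
      (ne_top_of_inv_natCast_mul_sum_ne_top hfin i) hε
  refine ⟨κ, hκ_prob, funext hκ_flip, ?_⟩
  calc (N : ℝ≥0∞)⁻¹ * ∑ i, ∫⁻ x', cbar (x i) x' ∂κ i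
      ≤ (N : ℝ≥0∞)⁻¹ * ∑ i, (ENNReal.ofReal (p i) * dBoundary cbar C (x i) + ε) := by
        gcongr with i
        exact hκ_cost i
    _ = (N : ℝ≥0∞)⁻¹ * ∑ i, ENNReal.ofReal (p i) * dBoundary cbar C (x i) + ε := by
        rw [Finset.sum_add_distrib, mul_add, Finset.sum_const, Finset.card_univ, Fintype.card_fin,
          nsmul_eq_mul, ENNReal.inv_mul_cancel_left (Nat.cast_ne_zero.2 hN.ne')
            (ENNReal.natCast_ne_top N)]

theorem iInf_measure_oppositeClass_mem_eq_iInf [MeasurableSingletonClass X]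
    (hC_bin : ∀ x, C x = 0 ∨ C x = 1) (hC_meas : Measurable C) (hrefl : ∀ x, cbar x x = 0) {N : ℕ}
    (hN : 0 < N) (x : Fin N → X) {P : Set (Fin N → ℝ)}
    (hP : ∀ p ∈ P, ∀ i, p i ∈ Set.Icc (0 : ℝ) 1) :
    ⨅ κ ∈ {κ : Fin N → Measure X | (∀ i, IsProbabilityMeasure (κ i)) ∧
        (fun i => (κ i).real (oppositeClass C (x i))) ∈ P},
        (N : ℝ≥0∞)⁻¹ * ∑ i, ∫⁻ x', cbar (x i) x' ∂κ i =
      ⨅ p ∈ P, (N : ℝ≥0∞)⁻¹ * ∑ i, ENNReal.ofReal (p i) * dBoundary cbar C (x i) := by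
  refine le_antisymm (le_iInf₂ fun p hp => ?_) (le_iInf₂ fun κ ⟨_, hκP⟩ => ?_)
  · refine ENNReal.le_of_forall_pos_le_add fun ε hε hfin => ?_
    obtain ⟨κ, hκ_prob, rfl, hle⟩ := exists_measure_oppositeClass_eq_of_sum_ne_top hC_bin hrefl hN
      (hP p hp) x hfin.ne (ENNReal.coe_ne_zero.2 hε.ne')
    exact (iInf₂_le κ ⟨hκ_prob, hp⟩).trans hle
  · refine (iInf₂_le _ hκP).trans ?_
    gcongr with i
    rw [ofReal_measureReal]
    exact measure_oppositeClass_mul_dBoundary_le_lintegral hC_meas (x i) (κ i)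

end FlipCost

theorem wasserstein_projection_primal_reformulation_general
    {X A E F : Type*} [MeasurableSpace X] [MeasurableSingletonClass X] [MeasurableSpace A]
    [MeasurableSingletonClass A] [NormedAddCommGroup E] [NormedSpace ℝ E] [CompleteSpace E]
    [NormedAddCommGroup F] [NormedSpace ℝ F] [CompleteSpace F] (cbar : X → X → ℝ≥0∞)
    (hc_symm : ∀ x x', cbar x x' = cbar x' x) (hc_refl : ∀ x, cbar x x = 0)
    (C : X → ℝ) (hC_bin : ∀ x, C x = 0 ∨ C x = 1) (hC_meas : Measurable C)
    (ψ : A × Bool → E) (φ : E → E → F) {N : ℕ} (hN : 0 < N)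
    (x : Fin N → X) (t : Fin N → A × Bool) :
    ⨅ Q ∈ fairMeasures C ψ φ,
        Wcost (prodCost cbar) Q ((N : ℝ≥0∞)⁻¹ • ∑ i, Measure.dirac (x i, t i)) =
      ⨅ p ∈ lpFeasible C ψ φ x t,
        (N : ℝ≥0∞)⁻¹ * ∑ i, ENNReal.ofReal (p i) * dBoundary cbar C (x i) := by
  have hfair : {κ : Fin N → Measure X |
        (∀ i, IsProbabilityMeasure (κ i)) ∧ labelledMixture t κ ∈ fairMeasures C ψ φ} =
      {κ | (∀ i, IsProbabilityMeasure (κ i)) ∧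
        (fun i => (κ i).real (oppositeClass C (x i))) ∈ lpFeasible C ψ φ x t} :=
    Set.ext fun κ => and_congr_right fun _ =>
      labelledMixture_mem_fairMeasures_iff hC_bin hC_meas hN x t κ
  rw [iInf_Wcost_empirical_eq_iInf_labelledMixture hN, hfair,
    ← iInf_measure_oppositeClass_mem_eq_iInf hC_bin hC_meas hc_refl hN x fun _ hp => hp.1]
  simp only [hc_symm _ (x _)]

/-- **Primal linear-programming reformulation of the Wasserstein projection
(Proposition 1).**  The projection distance `𝒫(P̂_N) = inf_{Q ∈ ℱ} W_c(Q, P̂_N)`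
equals the optimal value of
`min_p { (1/N) Σᵢ pᵢ d(xᵢ) : p ∈ [0,1]^N, Σᵢ (1−2𝒞(xᵢ)) φ(uᵢ, E_{P̂_N}[U]) pᵢ
  = −Σᵢ 𝒞(xᵢ) φ(uᵢ, E_{P̂_N}[U]) }`,
both sides being `+∞` when the corresponding constraint set is empty. -/
theorem wasserstein_projection_primal_reformulation
    {d s m : ℕ} (𝒳 : Set (Fin d → ℝ)) (𝒜 : Type*)
    [MeasurableSpace 𝒜] [Fintype 𝒜] [MeasurableSingletonClass 𝒜]
    (cbar : ↥𝒳 → ↥𝒳 → ℝ≥0∞)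
    (hc_lsc : LowerSemicontinuous (fun p : ↥𝒳 × ↥𝒳 => cbar p.1 p.2))
    (hc_symm : ∀ x x', cbar x x' = cbar x' x)
    (hc_zero : ∀ x x', cbar x x' = 0 ↔ x = x')
    (C : ↥𝒳 → ℝ) (hC_bin : ∀ x, C x = 0 ∨ C x = 1) (hC_meas : Measurable C)
    (ψ : 𝒜 × Bool → Fin s → ℝ)
    (φ : (Fin s → ℝ) → (Fin s → ℝ) → Fin m → ℝ)
    {N : ℕ} (hN : 0 < N)
    (x : Fin N → ↥𝒳) (a : Fin N → 𝒜) (y : Fin N → Bool) :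
    -- 𝒫(P̂_N)
    (⨅ Q ∈ fairSet 𝒳 𝒜 C ψ φ, Wcost (prodCost cbar) Q (empMeasure x a y))
    =
    -- optimal value of the finite linear program
    ⨅ p ∈ {p : Fin N → ℝ |
        (∀ i, p i ∈ Set.Icc (0:ℝ) 1) ∧
        ∑ i, ((1 - 2 * C (x i)) * p i) •
            φ (ψ (a i, y i)) ((N : ℝ)⁻¹ • ∑ j, ψ (a j, y j))
          = - ∑ i, C (x i) •
            φ (ψ (a i, y i)) ((N : ℝ)⁻¹ • ∑ j, ψ (a j, y j))},
      (N : ℝ≥0∞)⁻¹ * ∑ i, ENNReal.ofReal (p i) * dBoundary cbar C (x i) :=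
  wasserstein_projection_primal_reformulation_general cbar hc_symm (fun x => (hc_zero x x).2 rfl)
    C hC_bin hC_meas ψ φ hN x fun i => (a i, y i)
end
end

section
/- Strong duality holds for the projection linear program: given φ_i := φ(u_i, E_{P̂_N}[U]) ∈ ℝ^m, labels 𝒞(x_i) ∈ {0,1} and values d(x_i) ∈ [0,∞], the optimal value of min_p { (1/N) Σ_i p_i d(x_i) : p ∈ [0,1]^N, Σ_i (1−2𝒞(x_i)) φ_i p_i = − Σ_i 𝒞(x_i) φ_i } (equal to +∞ if infeasible, with the convention ∞·0 = 0) equals 𝒟(P̂_N) := sup_{γ ∈ ℝ^m} (1/N) Σ_i [ γᵀφ_i 𝒞(x_i) + ( d(x_i) + (1−2𝒞(x_i)) γᵀφ_i )⁻ ], where (t)⁻ = min{t,0} and (∞ + r)⁻ = 0 for any real r. -/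
open BigOperators ENNReal

noncomputable section

/-- `(D + r)⁻ = min{D + r, 0}`, with the convention `(∞ + r)⁻ = 0` for real `r`,
where `D ∈ [0,∞]` and `r ∈ ℝ`. -/
def negPartE (D : ℝ≥0∞) (r : ℝ) : ℝ := if D = ⊤ then 0 else min (D.toReal + r) 0

/-! The Lagrangian of the program is convex and continuous in `p` on a compact convex box and affine
in the multiplier `γ`, so Sion's minimax theorem exchanges `inf_p` and `sup_γ`. The supremum over
`γ` is the cost where the constraint holds and `+∞` elsewhere; the infimum over the box splits into
the one-dimensional problems `inf_{t ∈ [0,1]} t (d + r) = (d + r)⁻`. Infinite values `d i` are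
absorbed into the box, where they force `p i = 0`. -/

open Matrix

section Lagrangian

variable {κ : Type*} [Fintype κ]

theorem iSup_coe_add_dotProduct (a : ℝ) (v : κ → ℝ) :
    ⨆ γ : κ → ℝ, ((a + γ ⬝ᵥ v : ℝ) : EReal) = ⨅ _ : v = 0, (a : EReal) := by
  by_cases hv : v = 0
  · simp [hv]
  · have hvv : v ⬝ᵥ v ≠ 0 := mt dotProduct_self_eq_zero.1 hv
    rw [iInf_neg hv, EReal.eq_top_iff_forall_lt]
    intro y
    refine lt_iSup_iff.2 ⟨((y - a + 1) / (v ⬝ᵥ v)) • v, EReal.coe_lt_coe_iff.2 ?_⟩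
    rw [smul_dotProduct, smul_eq_mul, div_mul_cancel₀ _ hvv]
    linarith

variable {E : Type*} [AddCommGroup E] [Module ℝ E]

theorem convexOn_add_dotProduct_sub {K : Set E} {c : E → ℝ} (hc : ConvexOn ℝ K c)
    (A : E →ₗ[ℝ] κ → ℝ) (b γ : κ → ℝ) : ConvexOn ℝ K fun x => c x + γ ⬝ᵥ (A x - b) := by
  have hlin : ConvexOn ℝ K fun x => γ ⬝ᵥ A x := (dotProductBilin ℝ ℝ γ ∘ₗ A).convexOn hc.1
  simp only [dotProduct_sub]
  exact hc.add (hlin.sub (concaveOn_const (γ ⬝ᵥ b) hc.1))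

theorem concaveOn_const_add_dotProduct (a : ℝ) (v : κ → ℝ) :
    ConcaveOn ℝ Set.univ fun γ : κ → ℝ => a + γ ⬝ᵥ v :=
  (concaveOn_const a convex_univ).add (((dotProductBilin ℝ ℝ).flip v).concaveOn convex_univ)

variable [TopologicalSpace E] [IsTopologicalAddGroup E] [ContinuousSMul ℝ E]

theorem biInf_eq_iSup_biInf_lagrangian {K : Set E} (hK : IsCompact K) {c : E → ℝ}
    (hconv : ConvexOn ℝ K c) (hlsc : LowerSemicontinuousOn c K) (A : E →L[ℝ] κ → ℝ) (b : κ → ℝ) :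
    ⨅ x ∈ K, ⨅ _ : A x = b, (c x : EReal) =
      ⨆ γ : κ → ℝ, ⨅ x ∈ K, ((c x + γ ⬝ᵥ (A x - b) : ℝ) : EReal) := by
  have hcoe : Monotone ((↑) : ℝ → EReal) := EReal.coe_strictMono.monotone
  rcases K.eq_empty_or_nonempty with rfl | hne
  · simp
  have hminimax := Sion.minimax' (Y := Set.univ)
    (f := fun x (γ : κ → ℝ) => ((c x + γ ⬝ᵥ (A x - b) : ℝ) : EReal)) hne hconv.1 hK
    (fun γ _ => ?_) (fun γ _ => ?_) convex_univ (fun x _ => ?_) (fun x _ => ?_)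
  · simpa only [Set.mem_univ, iInf_pos, iSup_pos, iSup_coe_add_dotProduct, sub_eq_zero]
      using hminimax
  · have hcont : Continuous fun x => γ ⬝ᵥ (A x - b) := by fun_prop
    exact continuous_coe_real_ereal.comp_lowerSemicontinuousOn
      (hlsc.add (hcont.lowerSemicontinuous.lowerSemicontinuousOn K)) hcoe
  · have hconvex := convexOn_add_dotProduct_sub hconv A.toLinearMap b γ
    exact QuasiconvexOn.monotone_comp (g := Real.toEReal) hcoe hconvex.quasiconvexOn
  · have hcont : Continuous fun γ : κ → ℝ => c x + γ ⬝ᵥ (A x - b) := by fun_prop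
    exact (continuous_coe_real_ereal.comp hcont).upperSemicontinuous.upperSemicontinuousOn _
  · have hconcave := concaveOn_const_add_dotProduct (c x) (A x - b)
    exact QuasiconcaveOn.monotone_comp (g := Real.toEReal) hcoe hconcave.quasiconcaveOn

end Lagrangian

section negPartE

theorem negPartE_mul_mul (c : NNReal) (D : ℝ≥0∞) (r : ℝ) :
    negPartE (c * D) (c * r) = c * negPartE D r := by
  rcases eq_or_ne c 0 with rfl | hc
  · simp [negPartE]
  · have htop : c * D = ⊤ ↔ D = ⊤ := by simp [ENNReal.mul_eq_top, hc]
    simp only [negPartE, htop, ENNReal.toReal_mul, ENNReal.coe_toReal, ← mul_add]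
    split_ifs
    · simp
    · rw [mul_min_of_nonneg _ _ c.coe_nonneg, mul_zero]

theorem isLeast_image_mul_toReal_add (D : ℝ≥0∞) (r : ℝ) :
    IsLeast ((fun t : ℝ => t * (D.toReal + r)) '' Set.Icc 0 (if D = ⊤ then 0 else 1))
      (negPartE D r) := by
  unfold negPartE
  split_ifs with hD
  · simp
  rcases le_total (D.toReal + r) 0 with hneg | hpos
  · rw [min_eq_left hneg]
    refine ⟨⟨1, by simp⟩, Set.forall_mem_image.2 fun t ht => ?_⟩
    exact le_mul_of_le_one_left hneg ht.2
  · rw [min_eq_right hpos]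
    refine ⟨⟨0, by simp⟩, Set.forall_mem_image.2 fun t ht => ?_⟩
    exact mul_nonneg ht.1 hpos

end negPartE

section BoxLP

variable {ι : Type*}

/-- The points `p` of the unit cube at which the cost `∑ i, p i * d i` is finite, i.e. with
`p i = 0` wherever `d i = ∞`; this is the domain on which the Lagrangian is real-valued. It is
encoded as an order interval so that compactness and convexity are immediate. -/
def finiteCostBox (d : ι → ℝ≥0∞) : Set (ι → ℝ) := Set.Icc 0 fun i => if d i = ⊤ then 0 else 1

theorem mem_finiteCostBox {d : ι → ℝ≥0∞} {p : ι → ℝ} :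
    p ∈ finiteCostBox d ↔ (∀ i, p i ∈ Set.Icc 0 1) ∧ ∀ i, d i = ⊤ → p i = 0 := by
  rw [finiteCostBox, ← Set.pi_univ_Icc, Set.mem_univ_pi, ← forall_and]
  refine forall_congr' fun i => ?_
  by_cases hi : d i = ⊤
  · simp +contextual [hi]
  · simp [hi]

variable [Fintype ι]

theorem isLeast_image_sum_pi {α : ι → Type*} {M : Type*} [AddCommMonoid M] [Preorder M]
    [AddLeftMono M] {s : ∀ i, Set (α i)} {f : ∀ i, α i → M} {a : ι → M}
    (h : ∀ i, IsLeast (f i '' s i) (a i)) :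
    IsLeast ((fun x : ∀ i, α i => ∑ i, f i (x i)) '' Set.univ.pi s) (∑ i, a i) := by
  choose x hx hfx using fun i => (h i).1
  refine ⟨⟨x, fun i _ => hx i, by simp only [hfx]⟩, Set.forall_mem_image.2 fun y hy => ?_⟩
  exact Finset.sum_le_sum fun i _ => (h i).2 ⟨y i, hy i trivial, rfl⟩

theorem isLeast_image_sum_finiteCostBox (d : ι → ℝ≥0∞) (r : ι → ℝ) :
    IsLeast ((fun p : ι → ℝ => ∑ i, p i * ((d i).toReal + r i)) '' finiteCostBox d)
      (∑ i, negPartE (d i) (r i)) := by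
  rw [finiteCostBox, ← Set.pi_univ_Icc]
  exact isLeast_image_sum_pi fun i => isLeast_image_mul_toReal_add (d i) (r i)

theorem sum_ofReal_mul_of_mem_finiteCostBox {d : ι → ℝ≥0∞} {p : ι → ℝ} (hp : p ∈ finiteCostBox d) :
    ∑ i, ENNReal.ofReal (p i) * d i = ENNReal.ofReal (p ⬝ᵥ fun i => (d i).toReal) := by
  obtain ⟨hp01, hptop⟩ := mem_finiteCostBox.1 hp
  rw [dotProduct,
    ENNReal.ofReal_sum_of_nonneg fun i _ => mul_nonneg (hp01 i).1 ENNReal.toReal_nonneg]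
  refine Finset.sum_congr rfl fun i _ => ?_
  rcases eq_or_ne (d i) ⊤ with hi | hi
  · simp [hptop i hi]
  · rw [ENNReal.ofReal_mul (hp01 i).1, ENNReal.ofReal_toReal hi]

theorem sum_ofReal_mul_of_notMem_finiteCostBox {d : ι → ℝ≥0∞} {p : ι → ℝ}
    (hp01 : ∀ i, p i ∈ Set.Icc 0 1) (hp : p ∉ finiteCostBox d) :
    ∑ i, ENNReal.ofReal (p i) * d i = ⊤ := by
  obtain ⟨i, hi, hpi⟩ : ∃ i, d i = ⊤ ∧ p i ≠ 0 := by
    simpa [mem_finiteCostBox.not, hp01] using hp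
  refine ENNReal.sum_eq_top.2 ⟨i, Finset.mem_univ i, ?_⟩
  rw [hi, ENNReal.mul_top (ENNReal.ofReal_pos.2 ((hp01 i).1.lt_of_ne' hpi)).ne']

theorem coe_ennreal_iInf {α : Sort*} (f : α → ℝ≥0∞) :
    ((⨅ a, f a : ℝ≥0∞) : EReal) = ⨅ a, (f a : EReal) :=
  EReal.coe_ennreal_strictMono.monotone.map_iInf_of_continuousAt
    continuous_coe_ennreal_ereal.continuousAt rfl

theorem coe_biInf_unitCube_eq_biInf_finiteCostBox (d : ι → ℝ≥0∞) (P : (ι → ℝ) → Prop) :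
    ((⨅ p ∈ {p : ι → ℝ | (∀ i, p i ∈ Set.Icc 0 1) ∧ P p},
        ∑ i, ENNReal.ofReal (p i) * d i : ℝ≥0∞) : EReal) =
      ⨅ p ∈ finiteCostBox d, ⨅ _ : P p, ((p ⬝ᵥ fun i => (d i).toReal : ℝ) : EReal) := by
  have hcost {p : ι → ℝ} (hp : p ∈ finiteCostBox d) :
      ((∑ i, ENNReal.ofReal (p i) * d i : ℝ≥0∞) : EReal) =
        ((p ⬝ᵥ fun i => (d i).toReal : ℝ) : EReal) := by
    rw [sum_ofReal_mul_of_mem_finiteCostBox hp, EReal.coe_ennreal_ofReal, max_eq_left]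
    exact dotProduct_nonneg_of_nonneg hp.1 fun i => ENNReal.toReal_nonneg
  simp only [coe_ennreal_iInf]
  refine le_antisymm (le_iInf₂ fun p hp => le_iInf fun hP => ?_) (le_iInf₂ fun p hp => ?_)
  · exact iInf₂_le_of_le p ⟨(mem_finiteCostBox.1 hp).1, hP⟩ (hcost hp).le
  · by_cases hbox : p ∈ finiteCostBox d
    · exact (iInf₂_le_of_le p hbox (iInf_le _ hp.2)).trans (hcost hbox).ge
    · simp [sum_ofReal_mul_of_notMem_finiteCostBox hp.1 hbox]

variable {κ : Type*} [Fintype κ]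

theorem biInf_finiteCostBox_lagrangian_eq (d : ι → ℝ≥0∞) (A : Matrix ι κ ℝ) (b γ : κ → ℝ) :
    ⨅ p ∈ finiteCostBox d,
        (((p ⬝ᵥ fun i => (d i).toReal) + γ ⬝ᵥ (p ᵥ* A - b) : ℝ) : EReal) =
      ((∑ i, negPartE (d i) ((A *ᵥ γ) i) - γ ⬝ᵥ b : ℝ) : EReal) := by
  have hsplit (p : ι → ℝ) : (p ⬝ᵥ fun i => (d i).toReal) + γ ⬝ᵥ (p ᵥ* A - b) =
      ∑ i, p i * ((d i).toReal + (A *ᵥ γ) i) - γ ⬝ᵥ b := by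
    rw [dotProduct_sub, dotProduct_comm γ (p ᵥ* A), ← dotProduct_mulVec, ← add_sub_assoc,
      ← dotProduct_add]
    rfl
  have hmono : Monotone fun x : ℝ => ((x - γ ⬝ᵥ b : ℝ) : EReal) :=
    fun x y hxy => EReal.coe_le_coe_iff.2 (sub_le_sub_right hxy _)
  simp only [hsplit]
  have hleast := hmono.map_isLeast (isLeast_image_sum_finiteCostBox d (A *ᵥ γ))
  rw [← sInf_image, ← hleast.isGLB.sInf_eq, Set.image_image]

theorem boxLP_strong_duality (d : ι → ℝ≥0∞) (A : Matrix ι κ ℝ) (b : κ → ℝ) :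
    ((⨅ p ∈ {p : ι → ℝ | (∀ i, p i ∈ Set.Icc 0 1) ∧ p ᵥ* A = b},
        ∑ i, ENNReal.ofReal (p i) * d i : ℝ≥0∞) : EReal) =
      ⨆ γ : κ → ℝ, ((∑ i, negPartE (d i) ((A *ᵥ γ) i) - γ ⬝ᵥ b : ℝ) : EReal) := by
  have hconv : ConvexOn ℝ (finiteCostBox d) fun p : ι → ℝ => p ⬝ᵥ fun i => (d i).toReal :=
    ((dotProductBilin ℝ ℝ).flip _).convexOn (convex_Icc _ _)
  have hcont : Continuous fun p : ι → ℝ => p ⬝ᵥ fun i => (d i).toReal := by fun_prop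
  simp only [coe_biInf_unitCube_eq_biInf_finiteCostBox, ← biInf_finiteCostBox_lagrangian_eq]
  exact biInf_eq_iSup_biInf_lagrangian (K := finiteCostBox d) isCompact_Icc hconv
    (hcont.lowerSemicontinuous.lowerSemicontinuousOn _) A.vecMulLinear.toContinuousLinearMap b

theorem boxLP_strong_duality_const_mul {c : NNReal} (hc : c ≠ 0) (d : ι → ℝ≥0∞) (A : Matrix ι κ ℝ)
    (b : κ → ℝ) :
    ((⨅ p ∈ {p : ι → ℝ | (∀ i, p i ∈ Set.Icc 0 1) ∧ p ᵥ* A = b},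
        c * ∑ i, ENNReal.ofReal (p i) * d i : ℝ≥0∞) : EReal) =
      ⨆ γ : κ → ℝ, ((c * (∑ i, negPartE (d i) ((A *ᵥ γ) i) - γ ⬝ᵥ b) : ℝ) : EReal) := by
  -- The factor `c` is absorbed by the costs `c * d i` and the rescaled multiplier `c • γ`.
  have hsurj : Function.Surjective fun γ : κ → ℝ => (c : ℝ) • γ :=
    (MulAction.bijective₀ (NNReal.coe_ne_zero.2 hc)).surjective
  have hdual (γ : κ → ℝ) : c * (∑ i, negPartE (d i) ((A *ᵥ γ) i) - γ ⬝ᵥ b) =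
      ∑ i, negPartE (c * d i) ((A *ᵥ ((c : ℝ) • γ)) i) - ((c : ℝ) • γ) ⬝ᵥ b := by
    simp only [mulVec_smul, Pi.smul_apply, smul_eq_mul, negPartE_mul_mul, smul_dotProduct, mul_sub,
      Finset.mul_sum]
  simp only [hdual, Finset.mul_sum, mul_left_comm (c : ℝ≥0∞)]
  rw [boxLP_strong_duality, hsurj.iSup_comp
    (g := fun γ => ((∑ i, negPartE (c * d i) ((A *ᵥ γ) i) - γ ⬝ᵥ b : ℝ) : EReal))]

end BoxLP

theorem projection_strong_duality_general {ι κ : Type*} [Fintype ι] [Nonempty ι] [Fintype κ]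
    (φ : ι → κ → ℝ) (C : ι → ℝ) (d : ι → ℝ≥0∞) :
    ((⨅ p ∈ {p : ι → ℝ | (∀ i, p i ∈ Set.Icc (0 : ℝ) 1) ∧
          ∀ k, ∑ i, (1 - 2 * C i) * φ i k * p i = -∑ i, C i * φ i k},
        (Fintype.card ι : ℝ≥0∞)⁻¹ * ∑ i, ENNReal.ofReal (p i) * d i : ℝ≥0∞) : EReal) =
      ⨆ γ : κ → ℝ, (((Fintype.card ι : ℝ)⁻¹ * ∑ i, ((∑ k, γ k * φ i k) * C i +
        negPartE (d i) ((1 - 2 * C i) * ∑ k, γ k * φ i k)) : ℝ) : EReal) := by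
  have hcard : (Fintype.card ι : NNReal) ≠ 0 := Nat.cast_ne_zero.2 Fintype.card_ne_zero
  let A : Matrix ι κ ℝ := of fun i k => (1 - 2 * C i) * φ i k
  have hconstraint (p : ι → ℝ) : p ᵥ* A = -(C ᵥ* of φ) ↔
      ∀ k, ∑ i, (1 - 2 * C i) * φ i k * p i = -∑ i, C i * φ i k := by
    simp only [funext_iff, vecMul, dotProduct, A, of_apply, Pi.neg_apply, mul_comm (p _)]
  have hmulVec (γ : κ → ℝ) (i : ι) : (A *ᵥ γ) i = (1 - 2 * C i) * ∑ k, γ k * φ i k := by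
    simp only [mulVec, dotProduct, A, of_apply, Finset.mul_sum, mul_assoc, mul_comm (γ _)]
  have hconst (γ : κ → ℝ) : γ ⬝ᵥ (C ᵥ* of φ) = ∑ i, (∑ k, γ k * φ i k) * C i := by
    rw [dotProduct_comm, ← dotProduct_mulVec]
    simp only [mulVec, dotProduct, of_apply, mul_comm]
  have hlp := boxLP_strong_duality_const_mul (inv_ne_zero hcard) d A (-(C ᵥ* of φ))
  simpa only [hconstraint, hmulVec, dotProduct_neg, hconst, sub_neg_eq_add, add_comm,
    ← Finset.sum_add_distrib, ENNReal.coe_inv hcard, ENNReal.coe_natCast, NNReal.coe_inv,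
    NNReal.coe_natCast] using hlp

/-- **Strong duality for the projection linear program (Proposition 2).**
Given `φᵢ := φ(uᵢ, E_{P̂_N}[U]) ∈ ℝ^m`, binary labels `𝒞(xᵢ) ∈ {0,1}` and values
`d(xᵢ) ∈ [0,∞]`, the optimal value of
`min_p { (1/N) Σᵢ pᵢ d(xᵢ) : p ∈ [0,1]^N, Σᵢ (1−2𝒞(xᵢ)) φᵢ pᵢ = − Σᵢ 𝒞(xᵢ) φᵢ }`
(equal to `+∞` if infeasible, with `∞·0 = 0`) equals
`𝒟(P̂_N) = sup_{γ ∈ ℝ^m} (1/N) Σᵢ [ γᵀφᵢ 𝒞(xᵢ) + (d(xᵢ) + (1−2𝒞(xᵢ)) γᵀφᵢ)⁻ ]`,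
the equality being read in the extended reals. -/
theorem projection_strong_duality
    {N m : ℕ} (hN : 0 < N)
    (φv : Fin N → Fin m → ℝ)       -- φᵢ = φ(uᵢ, E_{P̂_N}[U])
    (C : Fin N → ℝ) (hC : ∀ i, C i = 0 ∨ C i = 1)   -- 𝒞(xᵢ)
    (dv : Fin N → ℝ≥0∞) :           -- d(xᵢ)
    ((⨅ p ∈ {p : Fin N → ℝ |
        (∀ i, p i ∈ Set.Icc (0:ℝ) 1) ∧
        ∀ k, ∑ i, (1 - 2 * C i) * φv i k * p i = - ∑ i, C i * φv i k},
        (N : ℝ≥0∞)⁻¹ * ∑ i, ENNReal.ofReal (p i) * dv i : ℝ≥0∞) : EReal)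
    =
    ⨆ γ : Fin m → ℝ,
      (((N : ℝ)⁻¹ * ∑ i, ((∑ k, γ k * φv i k) * C i +
          negPartE (dv i) ((1 - 2 * C i) * ∑ k, γ k * φv i k)) : ℝ) : EReal) := by
  have := Fin.pos_iff_nonempty.1 hN
  simpa only [Fintype.card_fin] using projection_strong_duality_general φv C dv
end
end
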